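/- The GL(4) tensor product algebra TA(4) = C[M_4 ⊕ M_4]^{U_4 × U_4 × U_4} is generated as a C-algebra by the twenty polynomials g_1, ..., g_20 listed in the context. -/

import Mathlib

open MvPolynomial

/-- The polynomial ring `ℂ[M_n ⊕ M_n]` in the variables `x_{ab}` (indexed by
`Sum.inl (a, b)`) and `y_{ab}` (indexed by `Sum.inr (a, b)`), `1 ≤ a, b ≤ n`. -/
abbrev MV (n : ℕ) := MvPolynomial ((Fin n × Fin n) ⊕ (Fin n × Fin n)) ℂ

/-- `g` is upper triangular with all diagonal entries equal to `1`. -/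
def IsUniUpper {n : ℕ} (g : Matrix (Fin n) (Fin n) ℂ) : Prop :=
  (∀ i, g i i = 1) ∧ ∀ i j : Fin n, j < i → g i j = 0

/-- The action of `(g₁, g₂, g₃) ∈ GL(n)³` on `ℂ[M_n ⊕ M_n]`, given by
`(g·f)(m₁, m₂) = f(g₁ᵀ m₁ g₂, g₁ᵀ m₂ g₃)`: it substitutes for `x_{ab}` the
`(a,b)` entry of `g₁ᵀ X g₂` and for `y_{ab}` the `(a,b)` entry of `g₁ᵀ Y g₃`. -/
noncomputable def act (n : ℕ) (g1 g2 g3 : Matrix (Fin n) (Fin n) ℂ) : MV n →ₐ[ℂ] MV n :=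
  aeval (Sum.elim
    (fun p : Fin n × Fin n => ∑ c : Fin n, ∑ d : Fin n,
      C (g1 c p.1) * C (g2 d p.2) * X (Sum.inl (c, d)))
    (fun p : Fin n × Fin n => ∑ c : Fin n, ∑ d : Fin n,
      C (g1 c p.1) * C (g3 d p.2) * X (Sum.inr (c, d))))

/-- The tensor product algebra `TA(n)`: the subalgebra of `ℂ[M_n ⊕ M_n]` of
polynomials invariant under `U_n × U_n × U_n`. -/
noncomputable def TA (n : ℕ) : Subalgebra ℂ (MV n) where
  carrier := {f | ∀ g1 g2 g3 : Matrix (Fin n) (Fin n) ℂ,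
      IsUniUpper g1 → IsUniUpper g2 → IsUniUpper g3 → act n g1 g2 g3 f = f}
  mul_mem' := by
    intro a b ha hb g1 g2 g3 u1 u2 u3
    rw [map_mul, ha g1 g2 g3 u1 u2 u3, hb g1 g2 g3 u1 u2 u3]
  one_mem' := by
    intro g1 g2 g3 u1 u2 u3
    rw [map_one]
  add_mem' := by
    intro a b ha hb g1 g2 g3 u1 u2 u3
    rw [map_add, ha g1 g2 g3 u1 u2 u3, hb g1 g2 g3 u1 u2 u3]
  zero_mem' := by
    intro g1 g2 g3 u1 u2 u3
    rw [map_zero]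
  algebraMap_mem' := by
    intro r g1 g2 g3 u1 u2 u3
    exact (act n g1 g2 g3).commutes r

/-- The minor `Δ(i; j₁, ..., j_k)`: the determinant of the `(i+k) × (i+k)` matrix
whose columns are columns `1, ..., i` of `(x_{ab})` followed by the columns of
`(y_{ab})` selected by `j`, restricted to rows `1, ..., i+k`. -/
noncomputable def Delta (n i k : ℕ) (hik : i + k ≤ n) (j : Fin k → Fin n) : MV n :=
  Matrix.det (Matrix.of fun r c : Fin (i + k) =>
    if hc : (c : ℕ) < i then
      X (Sum.inl (Fin.castLE hik r, ⟨(c : ℕ), by omega⟩))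
    else
      X (Sum.inr (Fin.castLE hik r, j ⟨(c : ℕ) - i, by have := c.isLt; omega⟩)))

/-- `g₁ = Δ(0; 1)`, ..., `g₂₀ = Δ(3;2)Δ(1;1) - Δ(3;1)Δ(1;2)`: the twenty generators
of the `GL(4)` tensor product algebra (column indices of `y` are zero-based). -/
noncomputable def g : Fin 20 → MV 4 :=
  ![Delta 4 0 1 (by omega) ![0],
    Delta 4 0 2 (by omega) ![0, 1],
    Delta 4 0 3 (by omega) ![0, 1, 2],
    Delta 4 0 4 (by omega) ![0, 1, 2, 3],
    Delta 4 1 0 (by omega) ![],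
    Delta 4 1 1 (by omega) ![0],
    Delta 4 1 2 (by omega) ![0, 1],
    Delta 4 1 3 (by omega) ![0, 1, 2],
    Delta 4 2 0 (by omega) ![],
    Delta 4 2 1 (by omega) ![0],
    Delta 4 2 2 (by omega) ![0, 1],
    Delta 4 3 0 (by omega) ![],
    Delta 4 3 1 (by omega) ![0],
    Delta 4 4 0 (by omega) ![],
    Delta 4 2 1 (by omega) ![1] * Delta 4 0 1 (by omega) ![0] -
      Delta 4 2 1 (by omega) ![0] * Delta 4 0 1 (by omega) ![1],
    Delta 4 2 2 (by omega) ![1, 2] * Delta 4 0 1 (by omega) ![0] -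
      Delta 4 2 2 (by omega) ![0, 2] * Delta 4 0 1 (by omega) ![1] +
      Delta 4 2 2 (by omega) ![0, 1] * Delta 4 0 1 (by omega) ![2],
    Delta 4 2 2 (by omega) ![0, 2] * Delta 4 0 2 (by omega) ![0, 1] -
      Delta 4 2 2 (by omega) ![0, 1] * Delta 4 0 2 (by omega) ![0, 2],
    Delta 4 3 1 (by omega) ![1] * Delta 4 0 1 (by omega) ![0] -
      Delta 4 3 1 (by omega) ![0] * Delta 4 0 1 (by omega) ![1],
    Delta 4 3 1 (by omega) ![2] * Delta 4 0 2 (by omega) ![0, 1] -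
      Delta 4 3 1 (by omega) ![1] * Delta 4 0 2 (by omega) ![0, 2] +
      Delta 4 3 1 (by omega) ![0] * Delta 4 0 2 (by omega) ![1, 2],
    Delta 4 3 1 (by omega) ![1] * Delta 4 1 1 (by omega) ![0] -
      Delta 4 3 1 (by omega) ![0] * Delta 4 1 1 (by omega) ![1]]

/-!
The argument is that of subalgebra (SAGBI) bases. Under `U₄ × U₄ × U₄` a generic pair `(X, Y)` can
be brought into each of three normal forms depending on fourteen parameters, according to which two
of the three flags defined by the pair are put in standard position. An invariant is determined by
its restriction to any one of these slices, and is a polynomial in the coordinates of each of them.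

The coordinates of the three slices are, up to units, Laurent monomials in common parameters `q`.
At a point `q` with values in a Hahn series field, lexicographically ordered, the orders of the
coordinates of each slice are linearly independent. Hence the order of a nonzero invariant lies in
three simplicial cones, one for each slice. The lattice points common to the three cones are
exactly the orders of the monomials in the `gⱼ`, so leading terms can be subtracted repeatedly. This
terminates because the torus coordinates have negative order, which leaves only finitely many
monomials in the `gⱼ` of larger order.
-/

namespace TA4

open Matrix

section Evaluation

variable {n : ℕ} {S T : Type*} [CommRing S] [Algebra ℂ S] [CommRing T] [Algebra ℂ T]

/-- Evaluation of a polynomial function on `M_n ⊕ M_n` at a pair of matrices with entries in an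
arbitrary commutative `ℂ`-algebra. -/
noncomputable def evalPair (A B : Matrix (Fin n) (Fin n) S) : MV n →ₐ[ℂ] S :=
  aeval (Sum.elim (fun p => A p.1 p.2) fun p => B p.1 p.2)

@[simp]
theorem evalPair_X_inl (A B : Matrix (Fin n) (Fin n) S) (p : Fin n × Fin n) :
    evalPair A B (X (Sum.inl p)) = A p.1 p.2 := by
  simp [evalPair]

@[simp]
theorem evalPair_X_inr (A B : Matrix (Fin n) (Fin n) S) (p : Fin n × Fin n) :
    evalPair A B (X (Sum.inr p)) = B p.1 p.2 := by
  simp [evalPair]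

theorem map_evalPair (φ : S →ₐ[ℂ] T) (A B : Matrix (Fin n) (Fin n) S) (f : MV n) :
    φ (evalPair A B f) = evalPair (A.map φ) (B.map φ) f := by
  have : φ.comp (evalPair A B) = evalPair (A.map φ) (B.map φ) := by
    ext (p | p) <;> simp
  exact congrArg (· f) this

theorem eq_of_evalPair_eq {f f' : MV n}
    (h : ∀ A B : Matrix (Fin n) (Fin n) ℂ, evalPair A B f = evalPair A B f') : f = f' := by
  refine MvPolynomial.funext fun v => ?_
  have hv : aeval v = evalPair (of fun a b => v (Sum.inl (a, b)))
      (of fun a b => v (Sum.inr (a, b))) := by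
    ext (p | p) <;> simp
  simpa [← hv, coe_aeval_eq_eval] using
    h (of fun a b => v (Sum.inl (a, b))) (of fun a b => v (Sum.inr (a, b)))

theorem evalPair_act (g₁ g₂ g₃ A B : Matrix (Fin n) (Fin n) ℂ) (f : MV n) :
    evalPair A B (act n g₁ g₂ g₃ f) = evalPair (g₁ᵀ * A * g₂) (g₁ᵀ * B * g₃) f := by
  have : (evalPair A B).comp (act n g₁ g₂ g₃) = evalPair (g₁ᵀ * A * g₂) (g₁ᵀ * B * g₃) := by
    ext (p | p) <;>
      simp only [act, AlgHom.comp_apply, aeval_X, Sum.elim_inl, Sum.elim_inr, map_sum, map_mul,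
        evalPair_X_inl, evalPair_X_inr, AlgHom.commutes, mul_apply, transpose_apply,
        Finset.sum_mul, ← algebraMap_eq, Algebra.algebraMap_self, RingHom.id_apply]
    all_goals
      rw [Finset.sum_comm]
      exact Finset.sum_congr rfl fun _ _ => Finset.sum_congr rfl fun _ _ => by ring
  exact congrArg (· f) this

theorem mem_TA_iff {f : MV n} :
    f ∈ TA n ↔ ∀ g₁ g₂ g₃ : Matrix (Fin n) (Fin n) ℂ, IsUniUpper g₁ → IsUniUpper g₂ →
      IsUniUpper g₃ → ∀ A B, evalPair (g₁ᵀ * A * g₂) (g₁ᵀ * B * g₃) f = evalPair A B f := by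
  refine ⟨fun hf g₁ g₂ g₃ h₁ h₂ h₃ A B => ?_, fun hf g₁ g₂ g₃ h₁ h₂ h₃ => ?_⟩
  · rw [← evalPair_act, hf g₁ g₂ g₃ h₁ h₂ h₃]
  · exact eq_of_evalPair_eq fun A B => by rw [evalPair_act, hf g₁ g₂ g₃ h₁ h₂ h₃]

end Evaluation

section Unitriangular

variable {n : ℕ} {S T : Type*} [CommRing S] [CommRing T]

/-- Upper triangular matrices with unit diagonal over any ring; over `ℂ` this unfolds to
`IsUniUpper`. -/
def IsUnitriangular (U : Matrix (Fin n) (Fin n) S) : Prop :=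
  (∀ i, U i i = 1) ∧ U.IsUpperTriangular

/-- The unitriangular matrix with the same entries above the diagonal as `A`. -/
def unitriangularPart (A : Matrix (Fin n) (Fin n) S) : Matrix (Fin n) (Fin n) S :=
  of fun i j => if i = j then 1 else if i < j then A i j else 0

theorem isUnitriangular_unitriangularPart (A : Matrix (Fin n) (Fin n) S) :
    IsUnitriangular (unitriangularPart A) :=
  ⟨fun i => by simp [unitriangularPart], fun i j (hij : j < i) => by
    simp [unitriangularPart, hij.ne', hij.not_gt]⟩

theorem map_unitriangularPart {F : Type*} [FunLike F S T] [RingHomClass F S T] (φ : F)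
    (A : Matrix (Fin n) (Fin n) S) :
    (unitriangularPart A).map φ = unitriangularPart (A.map φ) := by
  ext i j
  simp only [unitriangularPart, map_apply, of_apply, apply_ite φ, map_one, map_zero]

namespace IsUnitriangular

variable {U : Matrix (Fin n) (Fin n) S}

theorem unitriangularPart_eq (h : IsUnitriangular U) : unitriangularPart U = U := by
  ext i j
  rcases lt_trichotomy i j with hij | rfl | hij
  · simp [unitriangularPart, hij, hij.ne]
  · simp [unitriangularPart, h.1]
  · simp [unitriangularPart, hij.ne', hij.not_gt, h.2 hij]

theorem det_eq_one (h : IsUnitriangular U) : U.det = 1 := by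
  simp [det_of_isUpperTriangular h.2, h.1]

theorem one : IsUnitriangular (1 : Matrix (Fin n) (Fin n) S) :=
  ⟨one_apply_eq, blockTriangular_one⟩

theorem submatrix (h : IsUnitriangular U) {m : ℕ} {e : Fin m → Fin n} (he : StrictMono e) :
    IsUnitriangular (U.submatrix e e) :=
  ⟨fun _ => h.1 _, fun _ _ hij => h.2 (he hij)⟩

end IsUnitriangular

end Unitriangular

-- Both sides are polynomial in the entries of the five matrices, so the identity over `ℂ` gives
-- it for generic matrices and hence over every `ℂ`-algebra.
theorem evalPair_mul_of_mem_TA {n : ℕ} {S : Type*} [CommRing S] [Algebra ℂ S] {f : MV n}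
    (hf : f ∈ TA n) {U₁ U₂ U₃ : Matrix (Fin n) (Fin n) S} (h₁ : IsUnitriangular U₁)
    (h₂ : IsUnitriangular U₂) (h₃ : IsUnitriangular U₃) (A B : Matrix (Fin n) (Fin n) S) :
    evalPair (U₁ᵀ * A * U₂) (U₁ᵀ * B * U₃) f = evalPair A B f := by
  let G : Fin 5 → Matrix (Fin n) (Fin n) (MvPolynomial (Fin 5 × Fin n × Fin n) ℂ) :=
    fun t => of fun a b => X (t, a, b)
  have generic : evalPair ((unitriangularPart (G 0))ᵀ * G 3 * unitriangularPart (G 1))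
      ((unitriangularPart (G 0))ᵀ * G 4 * unitriangularPart (G 2)) f = evalPair (G 3) (G 4) f := by
    refine MvPolynomial.funext fun v => ?_
    rw [← coe_aeval_eq_eval, RingHom.coe_coe, map_evalPair, map_evalPair]
    simp only [Matrix.map_mul, transpose_map, map_unitriangularPart]
    exact mem_TA_iff.1 hf _ _ _ (isUnitriangular_unitriangularPart _)
      (isUnitriangular_unitriangularPart _) (isUnitriangular_unitriangularPart _) _ _
  let φ := aeval (R := ℂ) fun p : Fin 5 × Fin n × Fin n => ![U₁, U₂, U₃, A, B] p.1 p.2.1 p.2.2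
  have hG (t : Fin 5) : (G t).map φ = ![U₁, U₂, U₃, A, B] t := by
    ext a b
    simp [G, φ]
  have := congrArg φ generic
  simp only [map_evalPair, Matrix.map_mul, transpose_map, map_unitriangularPart, hG] at this
  simpa [h₁.unitriangularPart_eq, h₂.unitriangularPart_eq, h₃.unitriangularPart_eq] using this

section Minors

variable {n i k : ℕ}

theorem append_update_castLE {R : Type*} [DecidableEq (Fin k)] (hik : i + k ≤ n)
    (a : Fin i → Fin n → R) (w : Fin k → Fin n → R) (c : Fin k) (v : Fin n → R) :
    (fun x r => Fin.append a (Function.update w c v) x (Fin.castLE hik r)) =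
      Function.update (fun x r => Fin.append a w x (Fin.castLE hik r)) (Fin.natAdd i c)
        fun r => v (Fin.castLE hik r) := by
  ext x r
  refine Fin.addCases (fun x => ?_) (fun x => ?_) x
  · rw [Fin.append_left, Function.update_of_ne (by simp [Fin.ext_iff]; omega), Fin.append_left]
  · rcases eq_or_ne x c with rfl | h
    · simp
    · simp [h]

variable {S : Type*} [CommRing S]

/-- The columns of `(A | B)` entering `Δ(i; j)`: columns `1, …, i` of `A`, then the columns of `B`
selected by `j`. -/
def minorCols (hik : i + k ≤ n) (j : Fin k → Fin n) : Fin (i + k) → Fin n ⊕ Fin n :=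
  Fin.append (fun c => Sum.inl (c.castLE (by omega))) fun c => Sum.inr (j c)

theorem evalPair_Delta [Algebra ℂ S] (hik : i + k ≤ n) (j : Fin k → Fin n)
    (A B : Matrix (Fin n) (Fin n) S) :
    evalPair A B (Delta n i k hik j) =
      ((fromCols A B).submatrix (Fin.castLE hik) (minorCols hik j)).det := by
  rw [Delta, AlgHom.map_det]
  congr 1
  ext r c
  refine Fin.addCases (fun c => ?_) (fun c => ?_) c <;> simp [minorCols, Fin.castLE]

theorem minorCols_injective (hik : i + k ≤ n) {j : Fin k → Fin n} (hj : Function.Injective j) :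
    Function.Injective (minorCols hik j) := by
  rw [minorCols, Fin.append_injective_iff]
  exact ⟨fun a b h => Fin.castLE_injective _ (Sum.inl_injective h),
    fun a b h => hj (Sum.inr_injective h), by simp⟩

theorem submatrix_mul_of_col_support {ι κ p q R : Type*} [Semiring R] [Fintype κ] [Fintype q]
    (M : Matrix ι κ R) (U : Matrix κ κ R) (r : p → ι) {e : q → κ} (he : Function.Injective e)
    (hU : ∀ x ∉ Set.range e, ∀ c, U x (e c) = 0) :
    (M * U).submatrix r e = M.submatrix r e * U.submatrix e e := by
  ext a b
  exact (Fintype.sum_of_injective e he _ _ (fun x hx => by simp [hU x hx b]) fun _ => rfl).symm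

theorem submatrix_transpose_mul_castLE {m : ℕ} {κ q R : Type*} [CommSemiring R]
    {U : Matrix (Fin n) (Fin n) R} (hU : U.IsUpperTriangular) (M : Matrix (Fin n) κ R)
    (hm : m ≤ n) (e : q → κ) :
    (Uᵀ * M).submatrix (Fin.castLE hm) e =
      (U.submatrix (Fin.castLE hm) (Fin.castLE hm))ᵀ * M.submatrix (Fin.castLE hm) e := by
  have key := submatrix_mul_of_col_support Mᵀ U e (Fin.castLE_injective hm) fun x hx c =>
    hU (show Fin.castLE hm c < x by
      rw [Fin.range_castLE, Set.mem_ofPred_eq, not_lt] at hx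
      exact Fin.lt_def.2 (c.isLt.trans_le hx))
  simpa [transpose_mul] using congrArg transpose key

theorem det_fromBlocks_submatrix_minorCols (hik : i + k ≤ n) {j : Fin k → Fin n}
    (hj : StrictMono j) {U₂ U₃ : Matrix (Fin n) (Fin n) S} (h₂ : IsUnitriangular U₂)
    (h₃ : IsUnitriangular U₃) :
    ((fromBlocks U₂ 0 0 U₃).submatrix (minorCols hik j) (minorCols hik j)).det = 1 := by
  refine IsUnitriangular.det_eq_one ⟨fun c => ?_, fun a b => ?_⟩
  · refine Fin.addCases (fun c => ?_) (fun c => ?_) c <;> simp [minorCols, h₂.1, h₃.1]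
  · refine Fin.addCases (fun a => ?_) (fun a => ?_) a <;>
      refine Fin.addCases (fun b => ?_) (fun b => ?_) b <;> intro hab
    · simp only [minorCols, submatrix_apply, Fin.append_left, fromBlocks_apply₁₁]
      exact h₂.2 hab
    · exact absurd (Fin.lt_def.1 hab) (by simp; omega)
    · simp [minorCols]
    · simpa [minorCols] using h₃.2 (hj (by simpa using hab))

theorem evalPair_mul_Delta [Algebra ℂ S] (hik : i + k ≤ n) {j : Fin k → Fin n} (hj : StrictMono j)
    {U₁ U₂ U₃ : Matrix (Fin n) (Fin n) S} (h₁ : IsUnitriangular U₁) (h₂ : IsUnitriangular U₂)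
    (h₃ : IsUnitriangular U₃) (hU : ∀ y ∉ Set.range j, ∀ c, U₃ y (j c) = 0)
    (A B : Matrix (Fin n) (Fin n) S) :
    evalPair (U₁ᵀ * A * U₂) (U₁ᵀ * B * U₃) (Delta n i k hik j) =
      evalPair A B (Delta n i k hik j) := by
  have hcols : fromCols (U₁ᵀ * A * U₂) (U₁ᵀ * B * U₃) =
      U₁ᵀ * fromCols A B * fromBlocks U₂ 0 0 U₃ := by
    rw [mul_fromCols, fromCols_mul_fromBlocks]
    simp
  have hsupport : ∀ x ∉ Set.range (minorCols hik j), ∀ c,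
      fromBlocks U₂ 0 0 U₃ x (minorCols hik j c) = 0 := by
    intro x hx c
    refine Fin.addCases (fun c => ?_) (fun c => ?_) c <;> rcases x with x | x <;>
      simp only [minorCols, Fin.append_left, Fin.append_right, fromBlocks_apply₁₁,
        fromBlocks_apply₁₂, fromBlocks_apply₂₁, fromBlocks_apply₂₂, Matrix.zero_apply]
    · refine h₂.2 (Fin.lt_def.2 (c.isLt.trans_le (not_lt.1 fun h =>
        hx ⟨Fin.castAdd k ⟨x, h⟩, Fin.append_left _ _ _⟩)))
    · exact hU x (fun ⟨y, hy⟩ => hx ⟨Fin.natAdd i y, by simp [minorCols, hy]⟩) c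
  rw [evalPair_Delta, evalPair_Delta, hcols,
    submatrix_mul_of_col_support _ _ _ (minorCols_injective hik hj.injective) hsupport,
    submatrix_transpose_mul_castLE h₁.2, det_mul, det_mul, det_transpose,
    (h₁.submatrix (Fin.strictMono_castLE hik)).det_eq_one,
    det_fromBlocks_submatrix_minorCols hik hj h₂ h₃, one_mul, mul_one]

theorem Delta_mem_TA (hik : i + k ≤ n) {j : Fin k → Fin n} (hj : ∀ c, (j c : ℕ) = c) :
    Delta n i k hik j ∈ TA n := by
  refine mem_TA_iff.2 fun U₁ U₂ U₃ h₁ h₂ h₃ A B =>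
    evalPair_mul_Delta hik (fun a b hab => Fin.lt_def.2 (by rwa [hj, hj])) h₁ h₂ h₃
      (fun y hy c => h₃.2 y (j c) ?_) A B
  have : k ≤ (y : ℕ) := not_lt.1 fun h => hy ⟨⟨y, h⟩, Fin.ext (hj _)⟩
  exact Fin.lt_def.2 (by rw [hj]; exact c.isLt.trans_le this)

/-- `Δ(i; -)` as an alternating form in the selected columns, the columns `a` being fixed. -/
noncomputable def minorForm (hik : i + k ≤ n) (a : Fin i → Fin n → S) :
    (Fin n → S) [⋀^Fin k]→ₗ[S] S where
  toFun w := detRowAlternating fun c r => Fin.append a w c (Fin.castLE hik r)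
  map_update_add' w c v v' := by
    simp only [append_update_castLE]
    exact detRowAlternating.map_update_add _ _ _ _
  map_update_smul' w c t v := by
    simp only [append_update_castLE]
    exact detRowAlternating.map_update_smul _ _ _ _
  map_eq_zero_of_eq' w c c' h hne :=
    detRowAlternating.map_eq_zero_of_eq _ (by simp [h])
      (Fin.natAdd_injective _ _ |>.ne hne)

theorem evalPair_Delta_eq_minorForm [Algebra ℂ S] (hik : i + k ≤ n) (j : Fin k → Fin n)
    (A B : Matrix (Fin n) (Fin n) S) :
    evalPair A B (Delta n i k hik j) =
      minorForm hik (fun c => Aᵀ (c.castLE (by omega))) fun c => Bᵀ (j c) := by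
  rw [evalPair_Delta, ← det_transpose]
  refine congrArg det ?_
  ext c r
  refine Fin.addCases (fun c => ?_) (fun c => ?_) c <;> simp [minorCols]

end Minors

section AlternatingForms

variable {R M : Type*} [CommRing R] [AddCommGroup M] [Module R M]

theorem alternating_two_swap (ω : M [⋀^Fin 2]→ₗ[R] R) (v w : M) : ω ![w, v] = -ω ![v, w] := by
  rw [← ω.map_swap ![v, w] (show (0 : Fin 2) ≠ 1 by decide)]
  congr 1
  ext c
  fin_cases c <;> rfl

theorem alternating_two_self (ω : M [⋀^Fin 2]→ₗ[R] R) (v : M) : ω ![v, v] = 0 :=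
  ω.map_eq_zero_of_eq _ (show ![v, v] 0 = ![v, v] 1 from rfl) (by decide)

theorem alternating_two_add_right (ω : M [⋀^Fin 2]→ₗ[R] R) (v w w' : M) :
    ω ![v, w + w'] = ω ![v, w] + ω ![v, w'] := by
  rw [alternating_two_swap, ω.map_vecCons_add, neg_add, ← alternating_two_swap,
    ← alternating_two_swap]

theorem alternating_two_smul_right (ω : M [⋀^Fin 2]→ₗ[R] R) (v w : M) (c : R) :
    ω ![v, c • w] = c * ω ![v, w] := by
  rw [alternating_two_swap, ω.map_vecCons_smul, ← smul_neg, ← alternating_two_swap, smul_eq_mul]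

variable (φ ψ : M [⋀^Fin 1]→ₗ[R] R) (ω η : M [⋀^Fin 2]→ₗ[R] R) (x y z : M) (s t u : R)

theorem wedge_one_one_shear :
    φ ![y + u • x] * ψ ![x] - φ ![x] * ψ ![y + u • x] = φ ![y] * ψ ![x] - φ ![x] * ψ ![y] := by
  simp only [AlternatingMap.map_vecCons_add, AlternatingMap.map_vecCons_smul, smul_eq_mul]
  ring

theorem wedge_two_one_shear :
    ω ![y + u • x, z + s • y + t • x] * φ ![x] - ω ![x, z + s • y + t • x] * φ ![y + u • x] +
        ω ![x, y + u • x] * φ ![z + s • y + t • x] =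
      ω ![y, z] * φ ![x] - ω ![x, z] * φ ![y] + ω ![x, y] * φ ![z] := by
  simp only [AlternatingMap.map_vecCons_add, AlternatingMap.map_vecCons_smul, smul_eq_mul,
    alternating_two_add_right, alternating_two_smul_right, alternating_two_self,
    alternating_two_swap ω x y]
  ring

theorem contraction_wedge_shear :
    ω ![x, z + s • y + t • x] * η ![x, y + u • x] -
        ω ![x, y + u • x] * η ![x, z + s • y + t • x] =
      ω ![x, z] * η ![x, y] - ω ![x, y] * η ![x, z] := by
  simp only [alternating_two_add_right, alternating_two_smul_right, alternating_two_self]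
  ring

end AlternatingForms

section GeneratorInvariance

theorem mem_TA_of_evalPair_mul_right {n : ℕ} {f : MV n}
    (hf : f ∈ Algebra.adjoin ℂ {d | ∃ i k hik j, StrictMono j ∧ d = Delta n i k hik j})
    (hU : ∀ {U : Matrix (Fin n) (Fin n) ℂ}, IsUnitriangular U →
      ∀ A B, evalPair A (B * U) f = evalPair A B f) :
    f ∈ TA n := by
  refine mem_TA_iff.2 fun U₁ U₂ U₃ h₁ h₂ h₃ A B => ?_
  have hle : Algebra.adjoin ℂ {d | ∃ i k hik j, StrictMono j ∧ d = Delta n i k hik j} ≤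
      AlgHom.equalizer (evalPair (U₁ᵀ * A * U₂) (U₁ᵀ * (B * U₃))) (evalPair A (B * U₃)) := by
    refine Algebra.adjoin_le ?_
    rintro _ ⟨i, k, hik, j, hj, rfl⟩
    simpa using evalPair_mul_Delta hik hj h₁ h₂ .one
      (fun y hy c => one_apply_ne fun h => hy ⟨c, h.symm⟩) A (B * U₃)
  rw [mul_assoc U₁ᵀ B, hle hf, hU h₃]

theorem Delta_mem_adjoin {n i k : ℕ} (hik : i + k ≤ n) {j : Fin k → Fin n} (hj : StrictMono j) :
    Delta n i k hik j ∈
      Algebra.adjoin ℂ {d | ∃ i k hik j, StrictMono j ∧ d = Delta n i k hik j} :=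
  Algebra.subset_adjoin ⟨i, k, hik, j, hj, rfl⟩

section Shear

variable {S : Type*} [CommRing S] {U : Matrix (Fin 4) (Fin 4) S}

theorem mul_unitriangular_col_zero (h : IsUnitriangular U) (B : Matrix (Fin 4) (Fin 4) S) :
    (B * U)ᵀ 0 = Bᵀ 0 := by
  ext r
  simp [mul_apply, Fin.sum_univ_four, h.1 0, h.2 (show (0 : Fin 4) < 1 by decide),
    h.2 (show (0 : Fin 4) < 2 by decide), h.2 (show (0 : Fin 4) < 3 by decide)]

theorem mul_unitriangular_col_one (h : IsUnitriangular U) (B : Matrix (Fin 4) (Fin 4) S) :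
    (B * U)ᵀ 1 = Bᵀ 1 + U 0 1 • Bᵀ 0 := by
  ext r
  simp [mul_apply, Fin.sum_univ_four, h.1 1, h.2 (show (1 : Fin 4) < 2 by decide),
    h.2 (show (1 : Fin 4) < 3 by decide)]
  ring

theorem mul_unitriangular_col_two (h : IsUnitriangular U) (B : Matrix (Fin 4) (Fin 4) S) :
    (B * U)ᵀ 2 = Bᵀ 2 + U 1 2 • Bᵀ 1 + U 0 2 • Bᵀ 0 := by
  ext r
  simp [mul_apply, Fin.sum_univ_four, h.1 2, h.2 (show (2 : Fin 4) < 3 by decide)]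
  ring

end Shear

variable {i i' : ℕ}

theorem evalPair_Delta_one (hi : i + 1 ≤ 4) (a : Fin 4) (A B : Matrix (Fin 4) (Fin 4) ℂ) :
    evalPair A B (Delta 4 i 1 hi ![a]) =
      minorForm hi (fun c => Aᵀ (c.castLE (by omega))) ![Bᵀ a] := by
  rw [evalPair_Delta_eq_minorForm]
  exact congrArg _ (funext fun c => by fin_cases c; rfl)

theorem evalPair_Delta_two (hi : i + 2 ≤ 4) (a b : Fin 4) (A B : Matrix (Fin 4) (Fin 4) ℂ) :
    evalPair A B (Delta 4 i 2 hi ![a, b]) =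
      minorForm hi (fun c => Aᵀ (c.castLE (by omega))) ![Bᵀ a, Bᵀ b] := by
  rw [evalPair_Delta_eq_minorForm]
  exact congrArg _ (funext fun c => by fin_cases c <;> rfl)

theorem wedge_one_one_mem_TA (hi : i + 1 ≤ 4) (hi' : i' + 1 ≤ 4) :
    Delta 4 i 1 hi ![1] * Delta 4 i' 1 hi' ![0] - Delta 4 i 1 hi ![0] * Delta 4 i' 1 hi' ![1] ∈
      TA 4 := by
  refine mem_TA_of_evalPair_mul_right ?_ fun hU A B => ?_
  · apply_rules [sub_mem, mul_mem, Delta_mem_adjoin] <;> decide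
  · simp only [map_sub, map_mul, evalPair_Delta_one, mul_unitriangular_col_zero hU,
      mul_unitriangular_col_one hU, wedge_one_one_shear]

theorem wedge_two_one_mem_TA (hi : i + 2 ≤ 4) (hi' : i' + 1 ≤ 4) :
    Delta 4 i 2 hi ![1, 2] * Delta 4 i' 1 hi' ![0] -
      Delta 4 i 2 hi ![0, 2] * Delta 4 i' 1 hi' ![1] +
      Delta 4 i 2 hi ![0, 1] * Delta 4 i' 1 hi' ![2] ∈ TA 4 := by
  refine mem_TA_of_evalPair_mul_right ?_ fun hU A B => ?_
  · apply_rules [add_mem, sub_mem, mul_mem, Delta_mem_adjoin] <;> decide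
  · simp only [map_add, map_sub, map_mul, evalPair_Delta_one, evalPair_Delta_two,
      mul_unitriangular_col_zero hU, mul_unitriangular_col_one hU, mul_unitriangular_col_two hU,
      wedge_two_one_shear]

theorem contraction_wedge_mem_TA (hi : i + 2 ≤ 4) (hi' : i' + 2 ≤ 4) :
    Delta 4 i 2 hi ![0, 2] * Delta 4 i' 2 hi' ![0, 1] -
      Delta 4 i 2 hi ![0, 1] * Delta 4 i' 2 hi' ![0, 2] ∈ TA 4 := by
  refine mem_TA_of_evalPair_mul_right ?_ fun hU A B => ?_
  · apply_rules [sub_mem, mul_mem, Delta_mem_adjoin] <;> decide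
  · simp only [map_sub, map_mul, evalPair_Delta_two,
      mul_unitriangular_col_zero hU, mul_unitriangular_col_one hU, mul_unitriangular_col_two hU,
      contraction_wedge_shear]

theorem g_mem_TA (m : Fin 20) : g m ∈ TA 4 := by
  have last : Delta 4 3 1 (by omega) ![2] * Delta 4 0 2 (by omega) ![0, 1] -
      Delta 4 3 1 (by omega) ![1] * Delta 4 0 2 (by omega) ![0, 2] +
      Delta 4 3 1 (by omega) ![0] * Delta 4 0 2 (by omega) ![1, 2] ∈ TA 4 := by
    convert wedge_two_one_mem_TA (i := 0) (i' := 3) (by omega) (by omega) using 1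
    ring
  fin_cases m
  on_goal 15 => exact wedge_one_one_mem_TA _ _
  on_goal 15 => exact wedge_two_one_mem_TA _ _
  on_goal 15 => exact contraction_wedge_mem_TA _ _
  on_goal 15 => exact wedge_one_one_mem_TA _ _
  on_goal 15 => exact last
  on_goal 15 => exact wedge_one_one_mem_TA _ _
  all_goals exact Delta_mem_TA _ (by decide)

theorem adjoin_range_g_le_TA : Algebra.adjoin ℂ (Set.range g) ≤ TA 4 :=
  Algebra.adjoin_le (Set.range_subset_iff.2 g_mem_TA)

end GeneratorInvariance

section SliceInjectivity

variable {n : ℕ} {K : Type*} [Field K]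

/-- The leading principal minor of order `k`. -/
def leadingMinor {R : Type*} [CommRing R] (A : Matrix (Fin n) (Fin n) R) (k : ℕ) (hk : k ≤ n) : R :=
  (A.submatrix (Fin.castLE hk) (Fin.castLE hk)).det

section

variable {R : Type*} [CommRing R] (A B : Matrix (Fin n) (Fin n) R) {k : ℕ} (hk : k ≤ n)
  {U : Matrix (Fin n) (Fin n) R}

theorem leadingMinor_transpose : leadingMinor Aᵀ k hk = leadingMinor A k hk := by
  rw [leadingMinor, ← transpose_submatrix, det_transpose, leadingMinor]

theorem leadingMinor_self : leadingMinor A n le_rfl = A.det := by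
  simp [leadingMinor]

theorem leadingMinor_transpose_mul (hU : IsUnitriangular U) :
    leadingMinor (Uᵀ * A) k hk = leadingMinor A k hk := by
  rw [leadingMinor, submatrix_transpose_mul_castLE hU.2, det_mul, det_transpose,
    (hU.submatrix (Fin.strictMono_castLE hk)).det_eq_one, one_mul, leadingMinor]

theorem leadingMinor_mul (hU : IsUnitriangular U) :
    leadingMinor (A * U) k hk = leadingMinor A k hk := by
  rw [← leadingMinor_transpose, transpose_mul, ← leadingMinor_transpose A]
  exact leadingMinor_transpose_mul Aᵀ hk hU

end

theorem evalPair_Delta_x {k : ℕ} (hk : k ≤ n) (A B : Matrix (Fin n) (Fin n) ℂ) :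
    evalPair A B (Delta n k 0 hk Fin.elim0) = leadingMinor A k hk := by
  rw [evalPair_Delta, leadingMinor]
  congr 1
  ext r c
  exact Fin.addCases (fun c => congrArg (fromCols A B _) (Fin.append_left _ _ c))
    (fun c => c.elim0) c

theorem evalPair_Delta_y {k : ℕ} (hk : 0 + k ≤ n) (A B : Matrix (Fin n) (Fin n) ℂ) :
    evalPair A B (Delta n 0 k hk (Fin.castLE (by omega))) = leadingMinor B k (by omega) := by
  rw [evalPair_Delta, leadingMinor, ← det_submatrix_equiv_self (finCongr (zero_add k))]
  congr 1
  ext r c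
  refine Fin.addCases (fun c => c.elim0) (fun c => ?_) c
  rw [submatrix_apply, minorCols, Fin.append_right]
  simp [Fin.castLE]

-- Solve for one column of `U` at a time, by inverting the leading block of `A` to its left.
theorem exists_unitriangular_column {A : Matrix (Fin n) (Fin n) K}
    (hA : ∀ k hk, leadingMinor A k hk ≠ 0) (j : Fin n) :
    ∃ c : Fin n → K, c j = 1 ∧ (∀ i, j < i → c i = 0) ∧ ∀ i, i < j → (A *ᵥ c) i = 0 := by
  have hj : (j : ℕ) ≤ n := j.isLt.le
  set M := A.submatrix (Fin.castLE hj) (Fin.castLE hj) with hM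
  have hdet : IsUnit M.det := (hA j hj).isUnit
  obtain ⟨x, hx⟩ : ∃ x, M *ᵥ x = fun i => -A (Fin.castLE hj i) j :=
    ⟨M⁻¹ *ᵥ _, by rw [mulVec_mulVec, mul_nonsing_inv M hdet, one_mulVec]⟩
  have hlt (i : Fin j) : Fin.castLE hj i < j := i.isLt
  refine ⟨Pi.single j 1 + ∑ i, Pi.single (Fin.castLE hj i) (x i), ?_, fun i hi => ?_,
    fun i hi => ?_⟩
  · simp [Finset.sum_apply, (hlt _).ne']
  · simp [Finset.sum_apply, hi.ne', ((hlt _).trans hi).ne']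
  · have := congrFun hx ⟨i, hi⟩
    simp only [mulVec, dotProduct, hM, submatrix_apply] at this
    simpa [mulVec_add, mulVec_sum, mul_comm, add_comm] using eq_neg_iff_add_eq_zero.1 this

theorem exists_unitriangular_mul_isLowerTriangular {A : Matrix (Fin n) (Fin n) K}
    (hA : ∀ k hk, leadingMinor A k hk ≠ 0) :
    ∃ U, IsUnitriangular U ∧ (A * U).IsLowerTriangular := by
  choose c hdiag hupper hlower using exists_unitriangular_column hA
  exact ⟨of fun i j => c j i, ⟨hdiag, fun i j hij => hupper j i hij⟩,
    fun i j hij => hlower j i hij⟩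

theorem exists_unitriangular_diagonal_lower {A B : Matrix (Fin n) (Fin n) K}
    (hA : ∀ k hk, leadingMinor A k hk ≠ 0) (hB : ∀ k hk, leadingMinor B k hk ≠ 0) :
    ∃ U₁ U₂ U₃ : Matrix (Fin n) (Fin n) K, IsUnitriangular U₁ ∧ IsUnitriangular U₂ ∧
      IsUnitriangular U₃ ∧ (U₁ᵀ * A * U₂).IsDiag ∧ (U₁ᵀ * B * U₃).IsLowerTriangular := by
  obtain ⟨U₂, h₂, hL⟩ := exists_unitriangular_mul_isLowerTriangular hA
  obtain ⟨U₁, h₁, hD⟩ := exists_unitriangular_mul_isLowerTriangular (A := (A * U₂)ᵀ)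
    fun k hk => by simpa only [leadingMinor_transpose, leadingMinor_mul A hk h₂] using hA k hk
  obtain ⟨U₃, h₃, hQ⟩ := exists_unitriangular_mul_isLowerTriangular (A := U₁ᵀ * B)
    fun k hk => by simpa only [leadingMinor_transpose_mul B hk h₁] using hB k hk
  refine ⟨U₁, U₂, U₃, h₁, h₂, h₃, ?_, hQ⟩
  have hD' : ((A * U₂)ᵀ * U₁).IsUpperTriangular := hL.transpose.mul h₁.2
  rw [mul_assoc, ← isDiag_transpose_iff, transpose_mul, transpose_transpose]
  intro i j hij
  rcases lt_or_gt_of_ne hij with h | h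
  exacts [hD h, hD' h]

theorem eq_zero_of_mem_TA_of_evalPair_eq_zero {f : MV n} (hf : f ∈ TA n)
    (h : ∀ P Q : Matrix (Fin n) (Fin n) ℂ, P.IsDiag → Q.IsLowerTriangular → P.det ≠ 0 →
      Q.det ≠ 0 → evalPair P Q f = 0) : f = 0 := by
  let F : MV n := ∏ k : Fin (n + 1), Delta n k 0 (Nat.lt_succ_iff.1 k.isLt) Fin.elim0 *
    Delta n 0 k (by omega) (Fin.castLE (by omega))
  have hF (A B : Matrix (Fin n) (Fin n) ℂ) : evalPair A B F =
      ∏ k : Fin (n + 1), leadingMinor A k (Nat.lt_succ_iff.1 k.isLt) *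
        leadingMinor B k (Nat.lt_succ_iff.1 k.isLt) := by
    simp only [F, map_prod, map_mul, evalPair_Delta_x, evalPair_Delta_y]
  have hF0 : F ≠ 0 := by
    intro h0
    simpa [h0, leadingMinor, submatrix_one _ (Fin.castLE_injective _)] using hF 1 1
  refine (mul_eq_zero.1 (eq_of_evalPair_eq (f := F * f) (f' := 0) fun A B => ?_)).resolve_left hF0
  rw [map_mul, map_zero]
  by_cases h0 : evalPair A B F = 0
  · rw [h0, zero_mul]
  rw [← ne_eq, hF, Finset.prod_ne_zero_iff] at h0
  have hA (k hk) : leadingMinor A k hk ≠ 0 :=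
    left_ne_zero_of_mul (h0 ⟨k, Nat.lt_succ_iff.2 hk⟩ (Finset.mem_univ _))
  have hB (k hk) : leadingMinor B k hk ≠ 0 :=
    right_ne_zero_of_mul (h0 ⟨k, Nat.lt_succ_iff.2 hk⟩ (Finset.mem_univ _))
  obtain ⟨U₁, U₂, U₃, h₁, h₂, h₃, hP, hQ⟩ := exists_unitriangular_diagonal_lower hA hB
  rw [← evalPair_mul_of_mem_TA hf h₁ h₂ h₃, h _ _ hP hQ, mul_zero]
  · simpa [h₁.det_eq_one, h₂.det_eq_one, leadingMinor_self] using hA n le_rfl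
  · simpa [h₁.det_eq_one, h₃.det_eq_one, leadingMinor_self] using hB n le_rfl

end SliceInjectivity

section HahnSeriesOrders

theorem exists_orderTop_lt_orderTop_sub_smul {Γ k : Type*} [LinearOrder Γ] [Field k]
    {x y : HahnSeries Γ k} (hxy : x.orderTop = y.orderTop) (hy : y ≠ 0) :
    ∃ c : k, x.orderTop < (x - c • y).orderTop := by
  obtain ⟨e, he⟩ := WithTop.ne_top_iff_exists.mp (HahnSeries.orderTop_ne_top.mpr hy)
  have hye : y.coeff e ≠ 0 := HahnSeries.coeff_orderTop_ne he.symm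
  refine ⟨x.coeff e / y.coeff e, lt_of_le_of_ne ?_ fun h => ?_⟩
  · exact (le_min le_rfl (hxy.trans_le (HahnSeries.orderTop_le_orderTop_smul _ y))).trans
      HahnSeries.min_orderTop_le_orderTop_sub
  · refine HahnSeries.coeff_orderTop_ne (h.symm.trans (hxy.trans he.symm)) ?_
    rw [HahnSeries.coeff_sub, HahnSeries.coeff_smul, smul_eq_mul, div_mul_cancel₀ _ hye, sub_self]

/-- Termination of the subduction algorithm. -/
theorem le_span_of_orderTop {Γ k M ι : Type*} [LinearOrder Γ] [Field k] [AddCommGroup M]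
    [Module k M] (φ : M →ₗ[k] HahnSeries Γ k) {V : Submodule k M} {b : ι → M} {v : ι → Γ}
    (hb : ∀ i, b i ∈ V) (hv : ∀ i, (φ (b i)).orderTop = v i)
    (hV : ∀ f ∈ V, f ≠ 0 → ∃ i, (φ f).orderTop = v i) (hfin : ∀ i, {j | v i ≤ v j}.Finite) :
    V ≤ Submodule.span k (Set.range b) := by
  by_contra hle
  obtain ⟨f₀, hf₀V, hf₀⟩ := Set.not_subset.mp hle
  let bad : Set ι := {i | ∃ f ∈ V, f ∉ Submodule.span k (Set.range b) ∧ (φ f).orderTop = v i}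
  have mem_bad {f : M} (hfV : f ∈ V) (hf : f ∉ Submodule.span k (Set.range b)) :
      ∃ i ∈ bad, (φ f).orderTop = v i := by
    obtain ⟨i, hi⟩ := hV f hfV fun h => hf (h ▸ Submodule.zero_mem _)
    exact ⟨i, ⟨f, hfV, hf, hi⟩, hi⟩
  obtain ⟨i₀, hi₀, -⟩ := mem_bad hf₀V hf₀
  obtain ⟨i, ⟨⟨f, hfV, hf, hfi⟩, hi₀i⟩, hmax⟩ :=
    Set.exists_max_image (bad ∩ {j | v i₀ ≤ v j}) v ((hfin i₀).inter_of_right _) ⟨i₀, hi₀, le_rfl⟩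
  obtain ⟨c, hc⟩ := exists_orderTop_lt_orderTop_sub_smul (hfi.trans (hv i).symm)
    (HahnSeries.orderTop_ne_top.mp (hv i ▸ WithTop.coe_ne_top))
  rw [← map_smul, ← map_sub, hfi] at hc
  obtain ⟨j, hj, hfj⟩ := mem_bad (V.sub_mem hfV (V.smul_mem c (hb i))) fun h => hf <|
    (Submodule.sub_mem_iff_left _
      (Submodule.smul_mem _ c (Submodule.subset_span (Set.mem_range_self i)))).mp h
  rw [hfj, WithTop.coe_lt_coe] at hc
  exact (hmax j ⟨hj, hi₀i.trans hc.le⟩).not_gt hc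

theorem orderTop_one_add {Γ k : Type*} [AddCommGroup Γ] [LinearOrder Γ] [Field k]
    {x : HahnSeries Γ k} (hx : 0 < x.orderTop) : (1 + x).orderTop = 0 := by
  rw [HahnSeries.orderTop_add_eq_left (HahnSeries.orderTop_one.trans_lt hx),
    HahnSeries.orderTop_one]

variable {Γ k : Type*} [AddCommGroup Γ] [LinearOrder Γ] [IsOrderedAddMonoid Γ] [Field k]

theorem orderTop_pow (x : HahnSeries Γ k) (n : ℕ) : (x ^ n).orderTop = n • x.orderTop := by
  induction n with
  | zero => rw [pow_zero, zero_smul, HahnSeries.orderTop_one]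
  | succ n ih => rw [pow_succ, succ_nsmul, HahnSeries.orderTop_mul, ih]

theorem orderTop_prod {ι : Type*} (s : Finset ι) (x : ι → HahnSeries Γ k) :
    (∏ i ∈ s, x i).orderTop = ∑ i ∈ s, (x i).orderTop := by
  classical
  induction s using Finset.induction_on with
  | empty => exact HahnSeries.orderTop_one
  | insert a s ha ih =>
    rw [Finset.prod_insert ha, Finset.sum_insert ha, HahnSeries.orderTop_mul, ih]

theorem orderTop_prod_pow {ι : Type*} (s : Finset ι) {x : ι → HahnSeries Γ k} {a : ι → Γ}
    (hx : ∀ i, (x i).orderTop = a i) (m : ι → ℕ) :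
    (∏ i ∈ s, x i ^ m i).orderTop = ((∑ i ∈ s, m i • a i : Γ) : WithTop Γ) := by
  simp only [orderTop_prod, orderTop_pow, hx, WithTop.coe_sum, WithTop.coe_nsmul]

/-- No two monomials can cancel, their orders being distinct. -/
theorem exists_mem_support_orderTop_aeval {σ : Type*} {P : MvPolynomial σ k} (hP : P ≠ 0)
    {x : σ → HahnSeries Γ k} {a : σ → Γ} (hx : ∀ i, (x i).orderTop = a i)
    (ha : LinearIndependent ℕ a) :
    ∃ m ∈ P.support, (aeval x P).orderTop = (Finsupp.linearCombination ℕ a m : Γ) := by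
  classical
  have order_term {m : σ →₀ ℕ} (hm : m ∈ P.support) :
      HahnSeries.addVal Γ k (algebraMap k _ (coeff m P) * ∏ i ∈ m.support, x i ^ m i) =
        (Finsupp.linearCombination ℕ a m : Γ) := by
    rw [HahnSeries.addVal_apply, HahnSeries.orderTop_mul, orderTop_prod_pow _ hx,
      HahnSeries.algebraMap_apply, HahnSeries.C_apply, Algebra.algebraMap_self, RingHom.id_apply,
      HahnSeries.orderTop_single (mem_support_iff.mp hm), WithTop.coe_zero, zero_add]
    rfl
  obtain ⟨m, hm, hmin⟩ := P.support.exists_min_image (Finsupp.linearCombination ℕ a)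
    (support_nonempty.mpr hP)
  refine ⟨m, hm, ?_⟩
  rw [aeval_def, eval₂_eq, ← Finset.add_sum_erase _ _ hm, ← HahnSeries.addVal_apply,
    AddValuation.map_add_eq_of_lt_left, order_term hm]
  rw [order_term hm]
  refine AddValuation.map_lt_sum _ WithTop.coe_ne_top fun m' hm' => ?_
  obtain ⟨hne, hm'⟩ := Finset.mem_erase.mp hm'
  rw [order_term hm', WithTop.coe_lt_coe]
  exact lt_of_le_of_ne (hmin m' hm') fun h => hne (ha h).symm

end HahnSeriesOrders

section Slices

variable {S : Type*} [CommRing S]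

/-- The upper unitriangular matrix with coordinates `p 0, …, p 5`. -/
def unip (p : Fin 14 → S) : Matrix (Fin 4) (Fin 4) S :=
  !![1, p 0, p 1, p 2; 0, 1, p 3, p 4; 0, 0, 1, p 5; 0, 0, 0, 1]

/-- The inverse of `unip p`. -/
def unipInv (p : Fin 14 → S) : Matrix (Fin 4) (Fin 4) S :=
  !![1, -p 0, p 0 * p 3 - p 1, -p 2 + p 0 * p 4 + p 1 * p 5 - p 0 * p 3 * p 5;
    0, 1, -p 3, p 3 * p 5 - p 4; 0, 0, 1, -p 5; 0, 0, 0, 1]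

theorem unipInv_mul_unip (p : Fin 14 → S) : unipInv p * unip p = 1 := by
  ext i j
  fin_cases i <;> fin_cases j <;>
    simp [unip, unipInv, mul_apply, Fin.sum_univ_four] <;> ring

theorem isUnitriangular_unip (p : Fin 14 → S) : IsUnitriangular (unip p) := by
  refine ⟨fun i => by fin_cases i <;> rfl, fun i j (hij : j < i) => ?_⟩
  fin_cases i <;> fin_cases j <;> first | rfl | exact absurd hij (by decide)

/-- The diagonal matrix of the first four torus coordinates. -/
def torusX (p : Fin 14 → S) : Matrix (Fin 4) (Fin 4) S := diagonal ![p 6, p 7, p 8, p 9]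

/-- The diagonal matrix of the last four torus coordinates. -/
def torusY (p : Fin 14 → S) : Matrix (Fin 4) (Fin 4) S := diagonal ![p 10, p 11, p 12, p 13]

/-- The permutation matrix of the longest element of the symmetric group. -/
def longest : Matrix (Fin 4) (Fin 4) S := !![0, 0, 0, 1; 0, 0, 1, 0; 0, 1, 0, 0; 1, 0, 0, 0]

/-- First matrices of the three families of normal forms for pairs of `4 × 4` matrices under
`U₄ × U₄ × U₄`; each family is a slice with fourteen coordinates. -/
def sliceX : Fin 3 → (Fin 14 → S) → Matrix (Fin 4) (Fin 4) S
  | 0, p => torusX p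
  | 1, p => unip p * longest * torusX p
  | 2, p => unipInv p * torusX p

/-- Second matrices of the normal forms of `sliceX`. -/
def sliceY : Fin 3 → (Fin 14 → S) → Matrix (Fin 4) (Fin 4) S
  | 0, p => (unip p)ᵀ * torusY p
  | 1, p => torusY p
  | 2, p => unipInv p * longest * torusY p

end Slices

section Charts

section Map

variable {S T Φ : Type*} [CommRing S] [CommRing T] [FunLike Φ S T] [RingHomClass Φ S T] (φ : Φ)
  (p : Fin 14 → S)

theorem map_unip : (unip p).map φ = unip (φ ∘ p) := by
  ext i j; fin_cases i <;> fin_cases j <;> simp [unip]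

theorem map_unipInv : (unipInv p).map φ = unipInv (φ ∘ p) := by
  ext i j; fin_cases i <;> fin_cases j <;> simp [unipInv]

theorem map_longest : (longest : Matrix _ _ S).map φ = longest := by
  ext i j; fin_cases i <;> fin_cases j <;> simp [longest]

theorem map_torusX : (torusX p).map φ = torusX (φ ∘ p) := by
  ext i j; fin_cases i <;> fin_cases j <;> simp [torusX]

theorem map_torusY : (torusY p).map φ = torusY (φ ∘ p) := by
  ext i j; fin_cases i <;> fin_cases j <;> simp [torusY]

theorem map_sliceX (s : Fin 3) : (sliceX s p).map φ = sliceX s (φ ∘ p) := by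
  fin_cases s <;> simp [sliceX, Matrix.map_mul, map_unip, map_unipInv, map_longest, map_torusX]

theorem map_sliceY (s : Fin 3) : (sliceY s p).map φ = sliceY s (φ ∘ p) := by
  fin_cases s <;>
    simp [sliceY, Matrix.map_mul, transpose_map, map_unip, map_unipInv, map_longest, map_torusY]

end Map

/-- Restriction of polynomial functions to the slice `s`, as polynomials in its coordinates. -/
noncomputable def restrict (s : Fin 3) : MV 4 →ₐ[ℂ] MvPolynomial (Fin 14) ℂ :=
  evalPair (sliceX s X) (sliceY s X)

theorem aeval_restrict {S : Type*} [CommRing S] [Algebra ℂ S] (s : Fin 3) (p : Fin 14 → S)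
    (f : MV 4) : aeval p (restrict s f) = evalPair (sliceX s p) (sliceY s p) f := by
  rw [restrict, map_evalPair, map_sliceX, map_sliceY]
  congr 3 <;> exact funext (aeval_X p)

/-- The exponents of the leading Laurent monomials of `chart`. -/
def chartExponent : Fin 3 → Fin 14 → Fin 14 → ℤ
  | 0 =>
    ![![1, 0, 0, 0, 0, 0, 0, 0, 0, 0, 0, 0, 0, 0],
      ![1, 1, 0, 0, 1, 0, 0, 0, 0, 0, 0, 0, 0, 0],
      ![1, 1, 1, 1, 1, 1, 0, 0, 0, 0, 0, 0, 0, 0],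
      ![0, 1, 0, 0, 0, 0, 0, 0, 0, 0, 0, 0, 0, 0],
      ![0, 1, 1, 0, 0, 1, 0, 0, 0, 0, 0, 0, 0, 0],
      ![0, 0, 1, 0, 0, 0, 0, 0, 0, 0, 0, 0, 0, 0],
      ![0, 0, 0, 0, 0, 0, 1, 0, 0, 0, 0, 0, 0, 0],
      ![0, 0, 0, 0, 0, 0, 0, 1, 0, 0, 0, 0, 0, 0],
      ![0, 0, 0, 0, 0, 0, 0, 0, 1, 0, 0, 0, 0, 0],
      ![0, 0, 0, 0, 0, 0, 0, 0, 0, 1, 0, 0, 0, 0],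
      ![0, 0, 0, 0, 0, 0, 0, 0, 0, 0, 1, 0, 0, 0],
      ![0, 0, 0, 0, 0, 0, 0, 0, 0, 0, 0, 1, 0, 0],
      ![0, 0, 0, 0, 0, 0, 0, 0, 0, 0, 0, 0, 1, 0],
      ![0, 0, 0, 0, 0, 0, 0, 0, 0, 0, 0, 0, 0, 1]]
  | 1 =>
    ![![-1, 0, 0, -1, -1, 0, 0, 0, 0, 0, 0, 0, 0, 0],
      ![-1, -1, 0, 0, -1, -1, 0, 0, 0, 0, 0, 0, 0, 0],
      ![-1, -1, -1, 0, 0, 0, 0, 0, 0, 0, 0, 0, 0, 0],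
      ![0, -1, 0, 0, 0, -1, 0, 0, 0, 0, 0, 0, 0, 0],
      ![0, -1, -1, 0, 0, 0, 0, 0, 0, 0, 0, 0, 0, 0],
      ![0, 0, -1, 0, 0, 0, 0, 0, 0, 0, 0, 0, 0, 0],
      ![1, 1, 1, 0, 0, 0, 1, 0, 0, 0, 0, 0, 0, 0],
      ![0, 1, 0, 0, 1, 1, 0, 1, 0, 0, 0, 0, 0, 0],
      ![0, -1, 0, 1, 0, 0, 0, 0, 1, 0, 0, 0, 0, 0],
      ![-1, -1, -1, -1, -1, -1, 0, 0, 0, 1, 0, 0, 0, 0],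
      ![0, 0, 0, 0, 0, 0, 0, 0, 0, 0, 1, 0, 0, 0],
      ![0, 0, 0, 0, 0, 0, 0, 0, 0, 0, 0, 1, 0, 0],
      ![0, 0, 0, 0, 0, 0, 0, 0, 0, 0, 0, 0, 1, 0],
      ![0, 0, 0, 0, 0, 0, 0, 0, 0, 0, 0, 0, 0, 1]]
  | 2 =>
    ![![-1, 0, 0, 0, 0, 0, 0, 0, 0, 0, 0, 0, 0, 0],
      ![-1, -1, 0, 0, 0, 0, 0, 0, 0, 0, 0, 0, 0, 0],
      ![-1, -1, -1, 0, 0, 0, 0, 0, 0, 0, 0, 0, 0, 0],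
      ![0, -1, 0, 0, -1, 0, 0, 0, 0, 0, 0, 0, 0, 0],
      ![0, -1, -1, 0, -1, -1, 0, 0, 0, 0, 0, 0, 0, 0],
      ![0, 0, -1, -1, 0, -1, 0, 0, 0, 0, 0, 0, 0, 0],
      ![0, 0, 0, 0, 0, 0, 1, 0, 0, 0, 0, 0, 0, 0],
      ![0, 0, 0, 0, 0, 0, 0, 1, 0, 0, 0, 0, 0, 0],
      ![0, 0, 0, 0, 0, 0, 0, 0, 1, 0, 0, 0, 0, 0],
      ![0, 0, 0, 0, 0, 0, 0, 0, 0, 1, 0, 0, 0, 0],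
      ![1, 1, 1, 1, 1, 1, 0, 0, 0, 0, 1, 0, 0, 0],
      ![0, 1, 0, -1, 0, 0, 0, 0, 0, 0, 0, 1, 0, 0],
      ![0, -1, 0, 0, -1, -1, 0, 0, 0, 0, 0, 0, 1, 0],
      ![-1, -1, -1, 0, 0, 0, 0, 0, 0, 0, 0, 0, 0, 1]]

variable {F : Type*} [Field F]

/-- The Laurent monomial with exponent vector `e` in fourteen variables. -/
def laurentMonomial (q : Fin 14 → F) (e : Fin 14 → ℤ) : F := ∏ i, q i ^ e i

/-- The cofactors of the Laurent monomials in `chart`, all of order zero at the series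
`genericPoint` below. -/
def chartUnit (q : Fin 14 → F) : Fin 3 → Fin 14 → F
  | 0 => ![1, 1, 1, 1 + q 4, 1 + (q 3 + q 3 * q 4), 1 + (q 5 + q 3 * q 5), 1, 1, 1, 1, 1, 1, 1, 1]
  | 1 => ![-(1 + (q 3 + q 3 * q 4)), 1 + (q 4 + q 4 * q 5), -1, -(1 + q 5), 1, -1, -1, 1, -1, 1, 1,
      1, 1, 1]
  | 2 => ![-(1 + (q 4 + q 4 * q 5)), 1 + (q 5 + q 3 * q 5), -1, -(1 + q 3), 1, -1, 1, 1, 1, 1, 1,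
      -1, 1, -1]

/-- The coordinates in slice `s` of the normal form of one and the same pair of matrices. The
parameters `q` are chosen such that the coordinates in each slice are Laurent monomials up to
units. -/
def chart (s : Fin 3) (q : Fin 14 → F) (i : Fin 14) : F :=
  laurentMonomial q (chartExponent s i) * chartUnit q s i

theorem laurentMonomial_vec (q : Fin 14 → F)
    (e₀ e₁ e₂ e₃ e₄ e₅ e₆ e₇ e₈ e₉ e₁₀ e₁₁ e₁₂ e₁₃ : ℤ) :
    laurentMonomial q ![e₀, e₁, e₂, e₃, e₄, e₅, e₆, e₇, e₈, e₉, e₁₀, e₁₁, e₁₂, e₁₃] =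
      q 0 ^ e₀ * q 1 ^ e₁ * q 2 ^ e₂ * q 3 ^ e₃ * q 4 ^ e₄ * q 5 ^ e₅ * q 6 ^ e₆ * q 7 ^ e₇ *
        q 8 ^ e₈ * q 9 ^ e₉ * q 10 ^ e₁₀ * q 11 ^ e₁₁ * q 12 ^ e₁₂ * q 13 ^ e₁₃ := by
  simp only [laurentMonomial, Fin.prod_univ_castSucc, Finset.univ_eq_empty, Finset.prod_empty,
    one_mul]
  rfl

variable (q : Fin 14 → F)

theorem chart_zero : chart 0 q =
    ![q 0, q 0 * q 1 * q 4, q 0 * q 1 * q 2 * q 3 * q 4 * q 5, q 1 * (1 + q 4),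
      q 1 * q 2 * q 5 * (1 + (q 3 + q 3 * q 4)), q 2 * (1 + (q 5 + q 3 * q 5)),
      q 6, q 7, q 8, q 9, q 10, q 11, q 12, q 13] := by
  funext i
  fin_cases i <;>
  · refine (congrArg₂ (· * ·) (laurentMonomial_vec q ..) rfl).trans ?_
    simp [chartUnit]

theorem chart_one : chart 1 q =
    ![-((q 0 * q 3 * q 4)⁻¹ * (1 + (q 3 + q 3 * q 4))),
      (q 0 * q 1 * q 4 * q 5)⁻¹ * (1 + (q 4 + q 4 * q 5)), -(q 0 * q 1 * q 2)⁻¹,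
      -((q 1 * q 5)⁻¹ * (1 + q 5)), (q 1 * q 2)⁻¹, -(q 2)⁻¹,
      -(q 0 * q 1 * q 2 * q 6), q 1 * q 4 * q 5 * q 7, -((q 1)⁻¹ * q 3 * q 8),
      (q 0 * q 1 * q 2 * q 3 * q 4 * q 5)⁻¹ * q 9, q 10, q 11, q 12, q 13] := by
  funext i
  fin_cases i <;>
  · refine (congrArg₂ (· * ·) (laurentMonomial_vec q ..) rfl).trans ?_
    simp [chartUnit, -mul_eq_mul_left_iff, -mul_eq_mul_right_iff] <;> ring

theorem chart_two : chart 2 q =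
    ![-((q 0)⁻¹ * (1 + (q 4 + q 4 * q 5))), (q 0 * q 1)⁻¹ * (1 + (q 5 + q 3 * q 5)),
      -(q 0 * q 1 * q 2)⁻¹, -((q 1 * q 4)⁻¹ * (1 + q 3)), (q 1 * q 2 * q 4 * q 5)⁻¹,
      -(q 2 * q 3 * q 5)⁻¹, q 6, q 7, q 8, q 9, q 0 * q 1 * q 2 * q 3 * q 4 * q 5 * q 10,
      -(q 1 * (q 3)⁻¹ * q 11), (q 1 * q 4 * q 5)⁻¹ * q 12, -((q 0 * q 1 * q 2)⁻¹ * q 13)] := by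
  funext i
  fin_cases i <;>
  · refine (congrArg₂ (· * ·) (laurentMonomial_vec q ..) rfl).trans ?_
    simp [chartUnit, -mul_eq_mul_left_iff, -mul_eq_mul_right_iff] <;> ring

end Charts

section Transitions

variable {F : Type*} [Field F] {q : Fin 14 → F}

theorem exists_eq_diagonal_mul {n : ℕ} {M : Matrix (Fin n) (Fin n) F} (hM : M.IsUpperTriangular)
    {d : Fin n → F} (hd : ∀ i, M i i = d i) (h0 : ∀ i, d i ≠ 0) :
    ∃ U, IsUnitriangular U ∧ M = diagonal d * U := by
  refine ⟨diagonal (fun i => (d i)⁻¹) * M, ⟨fun i => ?_, fun i j hij => ?_⟩, ?_⟩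
  · rw [diagonal_mul, hd, inv_mul_cancel₀ (h0 i)]
  · rw [diagonal_mul, hM hij, mul_zero]
  · rw [← mul_assoc, diagonal_mul_diagonal]
    simp [h0]

theorem exists_transpose_unip_mul_sliceX_one (hq : ∀ i, q i ≠ 0) :
    ∃ U, IsUnitriangular U ∧
      (unip (chart 0 q))ᵀ * sliceX 1 (chart 1 q) = torusX (chart 0 q) * U := by
  simp only [sliceX, torusX, ← mul_assoc]
  refine exists_eq_diagonal_mul (fun i j (hij : j < i) => ?_) (fun i => ?_) fun i => ?_
  · rw [mul_diagonal]
    fin_cases i <;> fin_cases j <;> first | exact absurd hij (by decide) | skip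
    all_goals
      simp [mul_apply, Fin.sum_univ_four, unip, longest, chart_zero, chart_one, hq]
      try field_simp [hq]
      try ring
  · rw [mul_diagonal]
    fin_cases i <;>
      simp [mul_apply, Fin.sum_univ_four, unip, longest, chart_zero, chart_one] <;>
      field_simp [hq] <;> ring
  · fin_cases i <;> simp [chart_zero, hq]

theorem exists_sliceX_two_eq (hq : ∀ i, q i ≠ 0) :
    ∃ U, IsUnitriangular U ∧ sliceX 2 (chart 2 q) = torusX (chart 0 q) * U := by
  simp only [sliceX, torusX]
  refine exists_eq_diagonal_mul (fun i j (hij : j < i) => ?_) (fun i => ?_) fun i => ?_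
  · rw [mul_diagonal]
    fin_cases i <;> fin_cases j <;> first | exact absurd hij (by decide) | skip
    all_goals simp [unipInv]
  · rw [mul_diagonal]
    fin_cases i <;> simp [unipInv, chart_zero, chart_two]
  · fin_cases i <;> simp [chart_zero, hq]

theorem exists_transpose_unipInv_mul_sliceY_two (hq : ∀ i, q i ≠ 0) :
    ∃ U, IsUnitriangular U ∧
      (unipInv (chart 0 q))ᵀ * sliceY 2 (chart 2 q) = torusY (chart 0 q) * U := by
  simp only [sliceY, torusY, ← mul_assoc]
  refine exists_eq_diagonal_mul (fun i j (hij : j < i) => ?_) (fun i => ?_) fun i => ?_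
  · rw [mul_diagonal]
    fin_cases i <;> fin_cases j <;> first | exact absurd hij (by decide) | skip
    all_goals
      simp [mul_apply, Fin.sum_univ_four, unipInv, longest, chart_zero, chart_two, hq]
      try field_simp [hq]
      try ring
  · rw [mul_diagonal]
    fin_cases i <;>
      simp [mul_apply, Fin.sum_univ_four, unipInv, longest, chart_zero, chart_two] <;>
      field_simp [hq] <;> ring
  · fin_cases i <;> simp [chart_zero, hq]

theorem evalPair_chart [Algebra ℂ F] (hq : ∀ i, q i ≠ 0) {f : MV 4} (hf : f ∈ TA 4) (s : Fin 3) :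
    evalPair (sliceX s (chart s q)) (sliceY s (chart s q)) f =
      evalPair (sliceX 0 (chart 0 q)) (sliceY 0 (chart 0 q)) f := by
  fin_cases s
  · rfl
  · obtain ⟨U, hU, hX⟩ := exists_transpose_unip_mul_sliceX_one hq
    have hY : (unip (chart 0 q))ᵀ * sliceY 1 (chart 1 q) = sliceY 0 (chart 0 q) := by
      simp [sliceY, torusY, chart_zero, chart_one]
    have h₁ := evalPair_mul_of_mem_TA hf (isUnitriangular_unip (chart 0 q)) .one .one
      (sliceX 1 (chart 1 q)) (sliceY 1 (chart 1 q))
    have h₂ := evalPair_mul_of_mem_TA hf .one hU .one (sliceX 0 (chart 0 q)) (sliceY 0 (chart 0 q))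
    rw [mul_one, mul_one, hX, hY] at h₁
    rw [transpose_one, one_mul, one_mul, mul_one, sliceX] at h₂
    exact h₁.symm.trans h₂
  · obtain ⟨U, hU, hX⟩ := exists_sliceX_two_eq hq
    obtain ⟨V, hV, hY⟩ := exists_transpose_unipInv_mul_sliceY_two hq
    have hY' : sliceY 2 (chart 2 q) = sliceY 0 (chart 0 q) * V := by
      rw [sliceY.eq_1, mul_assoc, ← hY, ← mul_assoc, ← transpose_mul, unipInv_mul_unip,
        transpose_one, one_mul]
    have h := evalPair_mul_of_mem_TA hf .one hU hV (sliceX 0 (chart 0 q)) (sliceY 0 (chart 0 q))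
    rw [transpose_one, one_mul, one_mul, ← hY'] at h
    rw [← h, sliceX.eq_1, ← hX]
    rfl

theorem aeval_chart_restrict [Algebra ℂ F] (hq : ∀ i, q i ≠ 0) {f : MV 4} (hf : f ∈ TA 4)
    (s : Fin 3) :
    aeval (chart s q) (restrict s f) =
      evalPair (sliceX 0 (chart 0 q)) (sliceY 0 (chart 0 q)) f := by
  rw [aeval_restrict, evalPair_chart hq hf]

end Transitions

section Generators

theorem evalPair_diagonal_Delta {n i k : ℕ} {S : Type*} [CommRing S] [Algebra ℂ S] (hik : i + k ≤ n)
    (j : Fin k → Fin n) (a : Fin n → S) (B : Matrix (Fin n) (Fin n) S) :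
    evalPair (diagonal a) B (Delta n i k hik j) = (∏ c : Fin i, a (c.castLE (by omega))) *
      (B.submatrix (fun r => (Fin.natAdd i r).castLE hik) j).det := by
  rw [evalPair_Delta, ← det_submatrix_equiv_self finSumFinEquiv, ← det_diagonal,
    ← det_fromBlocks_zero₂₁ _ (B.submatrix (fun r => (r.castAdd k).castLE hik) j)]
  congr 1
  ext (r | r) (c | c) <;> simp [minorCols, diagonal_apply, Fin.ext_iff]
  · rfl
  · omega

/-- The exponents of the leading Laurent monomials of the generators in the coordinates `q` of
`chart 0 q`. -/
def generatorExponent : Fin 20 → Fin 14 → ℤ :=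
  ![
    ![0, 0, 0, 0, 0, 0, 0, 0, 0, 0, 1, 0, 0, 0],
    ![0, 0, 0, 0, 0, 0, 0, 0, 0, 0, 1, 1, 0, 0],
    ![0, 0, 0, 0, 0, 0, 0, 0, 0, 0, 1, 1, 1, 0],
    ![0, 0, 0, 0, 0, 0, 0, 0, 0, 0, 1, 1, 1, 1],
    ![0, 0, 0, 0, 0, 0, 1, 0, 0, 0, 0, 0, 0, 0],
    ![1, 0, 0, 0, 0, 0, 1, 0, 0, 0, 1, 0, 0, 0],
    ![1, 1, 0, 0, 0, 0, 1, 0, 0, 0, 1, 1, 0, 0],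
    ![1, 1, 1, 0, 0, 0, 1, 0, 0, 0, 1, 1, 1, 0],
    ![0, 0, 0, 0, 0, 0, 1, 1, 0, 0, 0, 0, 0, 0],
    ![1, 1, 0, 0, 1, 0, 1, 1, 0, 0, 1, 0, 0, 0],
    ![1, 2, 1, 0, 1, 1, 1, 1, 0, 0, 1, 1, 0, 0],
    ![0, 0, 0, 0, 0, 0, 1, 1, 1, 0, 0, 0, 0, 0],
    ![1, 1, 1, 1, 1, 1, 1, 1, 1, 0, 1, 0, 0, 0],
    ![0, 0, 0, 0, 0, 0, 1, 1, 1, 1, 0, 0, 0, 0],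
    ![0, 1, 0, 0, 0, 0, 1, 1, 0, 0, 1, 1, 0, 0],
    ![0, 1, 1, 0, 0, 0, 1, 1, 0, 0, 1, 1, 1, 0],
    ![1, 1, 1, 0, 1, 0, 1, 1, 0, 0, 2, 1, 1, 0],
    ![0, 1, 1, 0, 0, 1, 1, 1, 1, 0, 1, 1, 0, 0],
    ![0, 0, 1, 0, 0, 0, 1, 1, 1, 0, 1, 1, 1, 0],
    ![1, 1, 1, 0, 0, 1, 2, 1, 1, 0, 1, 1, 0, 0]]

variable {F : Type*} [Field F]

/-- The cofactors of the Laurent monomials of `generatorExponent` in the generators. -/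
def generatorUnit (q : Fin 14 → F) : Fin 20 → F :=
  ![1, 1, 1, 1, 1, 1, 1, 1, 1, 1, 1, 1, 1, 1, 1 + q 4, 1 + (q 4 + q 4 * q 5), 1 + q 5,
    1 + (q 3 + q 3 * q 4), 1 + (q 5 + q 3 * q 5), 1 + q 3]

theorem evalPair_chart_zero_g [Algebra ℂ F] (q : Fin 14 → F) (j : Fin 20) :
    evalPair (sliceX 0 (chart 0 q)) (sliceY 0 (chart 0 q)) (g j) =
      laurentMonomial q (generatorExponent j) * generatorUnit q j := by
  simp only [sliceX, sliceY, torusX]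
  fin_cases j <;>
  · refine .trans ?_ (congrArg₂ (· * ·) (laurentMonomial_vec q ..) rfl).symm
    simp [g, evalPair_diagonal_Delta, det_succ_row_zero, Fin.sum_univ_succ, Fin.prod_univ_succ,
      mul_apply, unip, torusY, chart_zero, generatorUnit, -mul_eq_mul_left_iff,
      -mul_eq_mul_right_iff] <;>
      ring

end Generators

section GenericPoint

section

variable {Γ k : Type*} [AddCommGroup Γ] [LinearOrder Γ] [IsOrderedAddMonoid Γ] [Field k]

theorem single_one_zpow (a : Γ) (n : ℤ) :
    HahnSeries.single a (1 : k) ^ n = HahnSeries.single (n • a) 1 := by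
  cases n with
  | ofNat n => simp
  | negSucc n => simp [zpow_negSucc, HahnSeries.inv_single, negSucc_zsmul]

theorem laurentMonomial_single_one (a : Fin 14 → Γ) (e : Fin 14 → ℤ) :
    laurentMonomial (fun i => HahnSeries.single (a i) (1 : k)) e =
      HahnSeries.single (∑ i, e i • a i) 1 := by
  simp only [laurentMonomial, single_one_zpow]
  induction (Finset.univ : Finset (Fin 14)) using Finset.cons_induction with
  | empty => simp
  | cons i s hi ih =>
    rw [Finset.prod_cons, Finset.sum_cons, ih, HahnSeries.single_mul_single, one_mul]

variable {q : Fin 14 → HahnSeries Γ k}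

theorem orderTop_units (h₃ : 0 < (q 3).orderTop) (h₄ : 0 < (q 4).orderTop)
    (h₅ : 0 < (q 5).orderTop) :
    (∀ s i, (chartUnit q s i).orderTop = 0) ∧ ∀ j, (generatorUnit q j).orderTop = 0 := by
  have hmul {x y : HahnSeries Γ k} (hx : 0 < x.orderTop) (hy : 0 < y.orderTop) :
      0 < (x * y).orderTop := by
    rw [HahnSeries.orderTop_mul]; exact lt_add_of_lt_of_nonneg hx hy.le
  have hadd {x y : HahnSeries Γ k} (hx : 0 < x.orderTop) (hy : 0 < y.orderTop) :
      0 < (x + y).orderTop :=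
    (lt_min hx hy).trans_le HahnSeries.min_orderTop_le_orderTop_add
  have u₃ := orderTop_one_add h₃
  have u₄ := orderTop_one_add h₄
  have u₅ := orderTop_one_add h₅
  have u₃₄ := orderTop_one_add (hadd h₃ (hmul h₃ h₄))
  have u₄₅ := orderTop_one_add (hadd h₄ (hmul h₄ h₅))
  have u₅₃ := orderTop_one_add (hadd h₅ (hmul h₃ h₅))
  constructor
  · intro s i
    fin_cases s <;> fin_cases i <;> simp [chartUnit, HahnSeries.orderTop_neg, -neg_add_rev, *]
  · intro j
    fin_cases j <;> simp [generatorUnit, *]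

end

/-- The total degree of a Laurent monomial in the eight torus coordinates. -/
def torusDegree : (Fin 14 → ℤ) →ₗ[ℤ] ℤ := ∑ i : Fin 8, LinearMap.proj (Fin.natAdd 6 i)

/-- The group of orders: the first component is minus the torus degree, so that only finitely many
products of generators have order above a given bound. -/
abbrev OrderGroup := ℤ ×ₗ Lex (Fin 14 → ℤ)

/-- The order of the Laurent monomial with a given exponent vector at `genericPoint`. -/
def monomialOrder : (Fin 14 → ℤ) →ₗ[ℤ] OrderGroup where
  toFun e := toLex (-torusDegree e, toLex e)
  map_add' e e' := by rw [map_add, neg_add]; rfl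
  map_smul' n e := by rw [map_smul, ← smul_neg]; rfl

theorem monomialOrder_injective : Function.Injective monomialOrder := fun _ _ h =>
  congrArg (fun x : OrderGroup => ofLex (ofLex x).2) h

/-- A point whose coordinates have linearly independent orders, those of the unipotent coordinates
being positive. -/
noncomputable def genericPoint (i : Fin 14) : HahnSeries OrderGroup ℂ :=
  HahnSeries.single (monomialOrder (Pi.single i 1)) 1

theorem genericPoint_ne_zero (i : Fin 14) : genericPoint i ≠ 0 :=
  HahnSeries.single_ne_zero one_ne_zero

theorem orderTop_laurentMonomial_genericPoint (e : Fin 14 → ℤ) :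
    (laurentMonomial genericPoint e).orderTop = monomialOrder e := by
  have : genericPoint = fun i => HahnSeries.single (monomialOrder (Pi.single i 1)) 1 := rfl
  rw [this, laurentMonomial_single_one, HahnSeries.orderTop_single one_ne_zero]
  simp_rw [← map_smul, ← map_sum, ← Pi.single_smul, smul_eq_mul, mul_one, Finset.univ_sum_single]

theorem orderTop_genericPoint_pos (i : Fin 6) : 0 < (genericPoint (i.castAdd 8)).orderTop := by
  rw [genericPoint, HahnSeries.orderTop_single one_ne_zero, ← WithTop.coe_zero, WithTop.coe_lt_coe]
  refine Prod.Lex.toLex_lt_toLex.2 (Or.inr ⟨?_, Pi.lt_toLex_update_self_iff.2 one_pos⟩)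
  fin_cases i <;> decide

theorem orderTop_chart_genericPoint (s : Fin 3) (i : Fin 14) :
    (chart s genericPoint i).orderTop = monomialOrder (chartExponent s i) := by
  rw [chart, HahnSeries.orderTop_mul, orderTop_laurentMonomial_genericPoint,
    (orderTop_units (orderTop_genericPoint_pos 3) (orderTop_genericPoint_pos 4)
      (orderTop_genericPoint_pos 5)).1, add_zero]

/-- Evaluation of polynomial functions at the pair of matrices with generic coordinates in
`chart 0`. -/
noncomputable def genericEval : MV 4 →ₐ[ℂ] HahnSeries OrderGroup ℂ :=
  evalPair (sliceX 0 (chart 0 genericPoint)) (sliceY 0 (chart 0 genericPoint))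

theorem orderTop_genericEval_g (j : Fin 20) :
    (genericEval (g j)).orderTop = monomialOrder (generatorExponent j) := by
  rw [genericEval, evalPair_chart_zero_g, HahnSeries.orderTop_mul,
    orderTop_laurentMonomial_genericPoint,
    (orderTop_units (orderTop_genericPoint_pos 3) (orderTop_genericPoint_pos 4)
      (orderTop_genericPoint_pos 5)).2, add_zero]

theorem linearIndependent_chartExponent (s : Fin 3) : LinearIndependent ℤ (chartExponent s) := by
  rw [Fintype.linearIndependent_iff]
  intro c hc
  have h (j : Fin 14) : ∑ i, c i * chartExponent s i j = 0 := by
    simpa only [Finset.sum_apply, Pi.smul_apply, smul_eq_mul, Pi.zero_apply] using congrFun hc j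
  fin_cases s <;>
    simp [Fin.forall_fin_succ, Fin.sum_univ_succ, chartExponent] at h ⊢ <;> omega

end GenericPoint

section Cones

-- `p` is the cancellation between the positive part of `y` and the negative part of `x`; `q` and
-- `r` are its analogues for `z`, `y` and for `x`, `z`.
theorem exists_nat_decomposition (x y z : ℤ) : ∃ p q r a a' b b' c c' : ℕ,
    x = a - a' - p + r ∧ y = b - b' + p - q ∧ z = c - c' + q - r ∧
    p + a' = max 0 (-x) ∧ q + b' = max 0 (-y) ∧ r + c' = max 0 (-z) ∧
    q + b' + a' = max 0 (max (-y) (-x - y)) ∧ p + a' + c' = max 0 (max (-x) (-x - z)) ∧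
    r + c' + b' = max 0 (max (-z) (-y - z)) := by
  refine ⟨(min y (-x)).toNat, (min z (-y)).toNat, (min x (-z)).toNat,
    (x - max 0 (-z)).toNat, (-x - max 0 y).toNat, (y - max 0 (-x)).toNat, (-y - max 0 z).toNat,
    (z - max 0 (-y)).toNat, (-z - max 0 x).toNat, ?_⟩
  omega

variable {n : Fin 14 → ℤ} {a : Fin 14 → ℕ}

theorem nonneg_of_eq_sum_chartExponent_zero (h : n = ∑ i, a i • chartExponent 0 i) :
    0 ≤ n 3 ∧ 0 ≤ n 4 - n 3 ∧ 0 ≤ n 5 - n 3 ∧ 0 ≤ n 2 - n 5 ∧ 0 ≤ n 1 + n 3 - n 4 - n 5 ∧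
    0 ≤ n 0 - n 4 ∧ 0 ≤ n 9 ∧ 0 ≤ n 13 := by
  replace h := congrFun h
  simp [Fin.forall_fin_succ, Fin.sum_univ_succ, chartExponent] at h
  omega

theorem nonneg_of_eq_sum_chartExponent_one (h : n = ∑ i, a i • chartExponent 1 i) :
    0 ≤ n 8 - n 9 - n 3 ∧ 0 ≤ n 4 - n 5 + n 8 - n 9 - n 3 ∧ 0 ≤ n 1 - n 2 - n 5 + n 8 - n 9 ∧
    0 ≤ n 3 - n 4 + n 7 - n 8 ∧ 0 ≤ n 0 - n 1 - n 4 + n 5 + n 7 - n 8 ∧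
    0 ≤ n 4 - n 0 + n 6 - n 7 := by
  replace h := congrFun h
  simp [Fin.forall_fin_succ, Fin.sum_univ_succ, chartExponent] at h
  omega

theorem nonneg_of_eq_sum_chartExponent_two (h : n = ∑ i, a i • chartExponent 2 i) :
    0 ≤ n 1 - n 0 - n 4 + n 10 - n 11 ∧ 0 ≤ n 5 - n 3 - n 4 + n 10 - n 11 ∧
    0 ≤ n 10 - n 11 - n 3 ∧ 0 ≤ n 2 - n 1 + n 4 - n 5 + n 11 - n 12 ∧
    0 ≤ n 3 - n 5 + n 11 - n 12 ∧ 0 ≤ n 5 - n 2 + n 12 - n 13 := by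
  replace h := congrFun h
  simp [Fin.forall_fin_succ, Fin.sum_univ_succ, chartExponent] at h
  omega

theorem exists_eq_sum_generatorExponent
    (h : ∀ s, ∃ a : Fin 14 → ℕ, n = ∑ i, a i • chartExponent s i) :
    ∃ k : Fin 20 → ℕ, n = ∑ j, k j • generatorExponent j := by
  obtain ⟨_, h₀⟩ := h 0
  obtain ⟨_, h₁⟩ := h 1
  obtain ⟨_, h₂⟩ := h 2
  have i₀ := nonneg_of_eq_sum_chartExponent_zero h₀
  have i₁ := nonneg_of_eq_sum_chartExponent_one h₁
  have i₂ := nonneg_of_eq_sum_chartExponent_two h₂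
  obtain ⟨p, q, r, a, a', b, b', c, c', hx, hy, hz, hp, hq, hr, hqa, hpc, hrb⟩ :=
    exists_nat_decomposition (n 0 - n 1 - n 3 + n 5) (n 1 - n 2 + n 3 - n 4) (n 4 - n 5)
  let k : Fin 20 → ℤ :=
    ![n 1 - n 0 - n 4 + n 10 - n 11 - p - a' - c', n 2 - n 1 + n 4 - n 5 + n 11 - n 12 - q - b',
      n 5 - n 2 + n 12 - n 13, n 13, n 4 - n 0 + n 6 - n 7, a, b, n 2 - n 5 - q - b' - a',
      n 3 - n 4 + n 7 - n 8 - p - a', c, n 5 - n 3 - r - c', n 8 - n 9 - n 3 - r - c' - b', n 3,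
      n 9, p, a', q, c', b', r]
  have hk : ∀ j, 0 ≤ k j := by
    simp [k, Fin.forall_fin_succ, -Int.sub_nonneg, -sub_nonneg]
    omega
  have hn : n = ∑ j, k j • generatorExponent j := by
    funext i
    simp only [Finset.sum_apply, Pi.smul_apply, smul_eq_mul]
    fin_cases i <;> simp [k, Fin.sum_univ_succ, generatorExponent] <;> omega
  refine ⟨fun j => (k j).toNat, hn.trans (Finset.sum_congr rfl fun j _ => ?_)⟩
  rw [← natCast_zsmul, Int.toNat_of_nonneg (hk j)]

end Cones

section Conclusion

theorem exists_slice_zero_eq {K : Type*} [Field K] {P Q : Matrix (Fin 4) (Fin 4) K}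
    (hP : P.IsDiag) (hQ : Q.IsLowerTriangular) (hdet : Q.det ≠ 0) :
    ∃ p : Fin 14 → K, sliceX 0 p = P ∧ sliceY 0 p = Q := by
  have h (i : Fin 4) : Q i i ≠ 0 := by
    rw [det_of_isLowerTriangular Q hQ, Finset.prod_ne_zero_iff] at hdet
    exact hdet i (Finset.mem_univ i)
  refine ⟨![Q 1 0 / Q 0 0, Q 2 0 / Q 0 0, Q 3 0 / Q 0 0, Q 2 1 / Q 1 1, Q 3 1 / Q 1 1,
    Q 3 2 / Q 2 2, P 0 0, P 1 1, P 2 2, P 3 3, Q 0 0, Q 1 1, Q 2 2, Q 3 3], ?_, ?_⟩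
  · rw [← hP.diagonal_diag]
    ext i j
    fin_cases i <;> fin_cases j <;> simp [sliceX, torusX]
  · ext i j
    rcases lt_or_ge i j with hij | hij
    · have : Q i j = 0 := hQ (by simpa using hij)
      rw [this]
      fin_cases i <;> fin_cases j <;> first
        | exact absurd hij (by decide)
        | simp [sliceY, torusY, unip, mul_diagonal]
    · fin_cases i <;> fin_cases j <;> first
        | exact absurd hij (by decide)
        | simp [sliceY, torusY, unip, mul_diagonal, h]

theorem restrict_zero_ne_zero {f : MV 4} (hf : f ∈ TA 4) (h₀ : f ≠ 0) : restrict 0 f ≠ 0 := by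
  refine fun h => h₀ (eq_zero_of_mem_TA_of_evalPair_eq_zero hf fun P Q hP hQ _ hdet => ?_)
  obtain ⟨p, rfl, rfl⟩ := exists_slice_zero_eq hP hQ hdet
  rw [← aeval_restrict, h, map_zero]

theorem exists_orderTop_aeval_chart_genericPoint {s : Fin 3} {P : MvPolynomial (Fin 14) ℂ}
    (hP : P ≠ 0) : ∃ a : Fin 14 → ℕ, (aeval (chart s genericPoint) P).orderTop =
      monomialOrder (∑ i, a i • chartExponent s i) := by
  have hli : LinearIndependent ℕ fun i => monomialOrder (chartExponent s i) :=
    ((linearIndependent_chartExponent s).map' monomialOrder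
      (LinearMap.ker_eq_bot.mpr monomialOrder_injective)).restrict_scalars' ℕ
  obtain ⟨m, -, hm⟩ :=
    exists_mem_support_orderTop_aeval hP (orderTop_chart_genericPoint s) hli
  refine ⟨m, hm.trans ?_⟩
  rw [Finsupp.linearCombination_apply, Finsupp.sum_fintype _ _ (by simp), map_sum]
  simp only [map_nsmul]

theorem exists_orderTop_genericEval {f : MV 4} (hf : f ∈ TA 4) (h₀ : f ≠ 0) :
    ∃ k : Fin 20 → ℕ,
      (genericEval f).orderTop = monomialOrder (∑ j, k j • generatorExponent j) := by
  have hchart (s : Fin 3) : aeval (chart s genericPoint) (restrict s f) = genericEval f :=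
    aeval_chart_restrict genericPoint_ne_zero hf s
  obtain ⟨a₀, ha₀⟩ :=
    exists_orderTop_aeval_chart_genericPoint (s := 0) (restrict_zero_ne_zero hf h₀)
  rw [hchart] at ha₀
  have hne : genericEval f ≠ 0 := HahnSeries.orderTop_ne_top.mp (ha₀ ▸ WithTop.coe_ne_top)
  obtain ⟨k, hk⟩ := exists_eq_sum_generatorExponent (n := ∑ i, a₀ i • chartExponent 0 i)
    fun s => by
      have hs : restrict s f ≠ 0 := fun h => hne (by rw [← hchart s, h, map_zero])
      obtain ⟨a, ha⟩ := exists_orderTop_aeval_chart_genericPoint (s := s) hs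
      rw [hchart, ha₀, WithTop.coe_inj] at ha
      exact ⟨a, monomialOrder_injective ha⟩
  exact ⟨k, hk ▸ ha₀⟩

theorem finite_setOf_sum_nsmul_le {ι : Type*} [Fintype ι] {d : ι → ℤ} (hd : ∀ j, 1 ≤ d j)
    (N : ℤ) :
    {k : ι → ℕ | ∑ j, k j • d j ≤ N}.Finite := by
  classical
  refine (Set.finite_Iic fun _ => N.toNat).subset fun k hk j => ?_
  rw [← Nat.cast_le (α := ℤ)]
  refine le_trans ?_ (Int.self_le_toNat N)
  calc (k j : ℤ) ≤ k j • d j := by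
        rw [nsmul_eq_mul]; exact le_mul_of_one_le_right (Nat.cast_nonneg _) (hd j)
    _ ≤ ∑ j, k j • d j := Finset.single_le_sum
        (fun j _ => nsmul_nonneg (zero_le_one.trans (hd j)) _) (Finset.mem_univ j)
    _ ≤ N := hk

theorem one_le_torusDegree_generatorExponent (j : Fin 20) :
    1 ≤ torusDegree (generatorExponent j) := by
  simp only [torusDegree, LinearMap.sum_apply, LinearMap.proj_apply]
  revert j
  decide

theorem torusDegree_le_of_le_monomialOrder {γ : OrderGroup} {e : Fin 14 → ℤ}
    (h : γ ≤ monomialOrder e) : torusDegree e ≤ -(ofLex γ).1 :=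
  le_neg_of_le_neg (Prod.Lex.monotone_fst _ _ h)

theorem finite_setOf_le_monomialOrder (γ : OrderGroup) :
    {k : Fin 20 → ℕ | γ ≤ monomialOrder (∑ j, k j • generatorExponent j)}.Finite := by
  refine (finite_setOf_sum_nsmul_le one_le_torusDegree_generatorExponent (-(ofLex γ).1)).subset
    fun k (hk : γ ≤ _) => ?_
  simp_rw [Set.mem_ofPred_eq, ← map_nsmul, ← map_sum]
  exact torusDegree_le_of_le_monomialOrder hk

theorem TA_le_adjoin_range_g : TA 4 ≤ Algebra.adjoin ℂ (Set.range g) := by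
  have hspan : Subalgebra.toSubmodule (TA 4) ≤
      Submodule.span ℂ (Set.range fun k : Fin 20 → ℕ => ∏ j, g j ^ k j) := by
    refine le_span_of_orderTop genericEval.toLinearMap
      (v := fun k => monomialOrder (∑ j, k j • generatorExponent j))
      (fun k => Subalgebra.prod_mem _ fun j _ => Subalgebra.pow_mem _ (g_mem_TA j) _) (fun k => ?_)
      (fun f hf h₀ => exists_orderTop_genericEval hf h₀)
      fun k => finite_setOf_le_monomialOrder _
    simp only [AlgHom.toLinearMap_apply, map_prod, map_pow, map_sum, map_nsmul]
    exact orderTop_prod_pow _ orderTop_genericEval_g k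
  refine Subalgebra.toSubmodule.le_iff_le.mp (hspan.trans (Submodule.span_le.mpr ?_))
  rintro _ ⟨k, rfl⟩
  exact Subalgebra.prod_mem _ fun j _ =>
    Subalgebra.pow_mem _ (Algebra.subset_adjoin (Set.mem_range_self j)) _

end Conclusion

end TA4

/-- The `GL(4)` tensor product algebra `TA(4)` is generated as a `ℂ`-algebra by the
twenty polynomials `g₁, ..., g₂₀`. -/
theorem TA4_generators : Algebra.adjoin ℂ (Set.range g) = TA 4 :=
  le_antisymm TA4.adjoin_range_g_le_TA TA4.TA_le_adjoin_range_g
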